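/- Let Λ ⊂ ℝ^n be a full-rank lattice and σ_s > 0. For t ∈ ℝ^n define m(t) = E_{X ~ D_{Λ+t, σ_s}}[‖X‖²]/σ_s² = (Σ_{y ∈ Λ+t} ‖y/σ_s‖² f_{σ_s}(y))/f_{σ_s}(Λ+t). Then for every ε ∈ (0,1), the set {t ∈ ℝ^n : m(t) ≤ (1−ε)n} has measure at most exp(−(ε²/4 + ε³/6)·n) under the Gaussian measure N(0, σ_s² I_n). -/

import Mathlib

open MeasureTheory Real Filter Pointwise
open scoped ENNReal RealInnerProductSpace

noncomputable section

/-- The (continuous) Gaussian density with parameter `σ` on `ℝⁿ`: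
`f_σ(x) = (2πσ²)^{-n/2} exp(-‖x‖²/(2σ²))`. -/
def gaussF (n : ℕ) (σ : ℝ) (x : EuclideanSpace ℝ (Fin n)) : ℝ :=
  (2 * π * σ ^ 2) ^ (-(n : ℝ) / 2) * Real.exp (-‖x‖ ^ 2 / (2 * σ ^ 2))

/-- The Gaussian mass `f_σ(S) = Σ_{y ∈ S} f_σ(y)` of a (countable) set `S ⊆ ℝⁿ`. -/
def gaussMass (n : ℕ) (σ : ℝ) (S : Set (EuclideanSpace ℝ (Fin n))) : ℝ :=
  ∑' y : S, gaussF n σ y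

/-- The Gaussian measure `N(0, σ² Iₙ)` on `ℝⁿ`, given by its density w.r.t. Lebesgue measure. -/
def gaussMeasure (n : ℕ) (σ : ℝ) : Measure (EuclideanSpace ℝ (Fin n)) :=
  volume.withDensity fun x => ENNReal.ofReal (gaussF n σ x)

/-- The coset `S + t` of a set `S ⊆ ℝⁿ`, i.e. `{x | x - t ∈ S}`. -/
def coset (n : ℕ) (S : Set (EuclideanSpace ℝ (Fin n))) (t : EuclideanSpace ℝ (Fin n)) :
    Set (EuclideanSpace ℝ (Fin n)) := {x | x - t ∈ S}

/-- The Voronoi cell of `S`: `{x | ⟪x,y⟫ ≤ ‖y‖²/2 for all y ∈ S}`. -/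
def voronoi (n : ℕ) (S : Set (EuclideanSpace ℝ (Fin n))) : Set (EuclideanSpace ℝ (Fin n)) :=
  {x | ∀ y ∈ S, ⟪x, y⟫ ≤ ‖y‖ ^ 2 / 2}

/-- The inverse error function `err⁻¹_ε(Λ)`: the least `s > 0` such that a standard Gaussian
leaves `s · V(Λ)` with probability at most `ε`. -/
def errInv (n : ℕ) (ε : ℝ) (S : Set (EuclideanSpace ℝ (Fin n))) : ℝ :=
  sInf {s : ℝ | 0 < s ∧ gaussMeasure n 1 ((s • voronoi n S)ᶜ) ≤ ENNReal.ofReal ε}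

/-- The Shannon entropy (in nats) of the discrete Gaussian `D_{S,σ}` supported on `S`,
which assigns mass `f_σ(y)/f_σ(S)` to each `y ∈ S`. -/
def dgEntropy (n : ℕ) (σ : ℝ) (S : Set (EuclideanSpace ℝ (Fin n))) : ℝ :=
  -∑' y : S, (gaussF n σ y / gaussMass n σ S) * Real.log (gaussF n σ y / gaussMass n σ S)

/-- The flatness factor `ε_Λ(σ) = sup_{x ∈ V(Λ)} |V(Λ)·f_σ(Λ+x) − 1|`. -/
def flatness (n : ℕ) (L : Submodule ℤ (EuclideanSpace ℝ (Fin n))) (σ : ℝ) : ℝ :=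
  ⨆ x : voronoi n (L : Set (EuclideanSpace ℝ (Fin n))),
    |ZLattice.covolume L volume *
        gaussMass n σ (coset n (L : Set (EuclideanSpace ℝ (Fin n))) x) - 1|

section helpers

variable {n : ℕ}

lemma lintegral_gauss (b : ℝ) (hb : 0 < b) :
    ∫⁻ x : EuclideanSpace ℝ (Fin n), ENNReal.ofReal (Real.exp (-b * ‖x‖ ^ 2))
      = ENNReal.ofReal ((π / b) ^ ((n : ℝ) / 2)) := by
  have h := GaussianFourier.integral_rexp_neg_mul_sq_norm
    (V := EuclideanSpace ℝ (Fin n)) hb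
  have hpos : 0 < (π / b) ^ ((n : ℝ) / 2) := by positivity
  simp only [finrank_euclideanSpace, Fintype.card_fin] at h
  rw [← h, ofReal_integral_eq_lintegral_ofReal]
  · by_contra hni
    rw [integral_undef hni] at h
    exact hpos.ne h
  · exact Eventually.of_forall fun x => (Real.exp_pos _).le

lemma gaussF_pos (σ : ℝ) (hσ : 0 < σ) (x : EuclideanSpace ℝ (Fin n)) : 0 < gaussF n σ x := by
  unfold gaussF
  positivity

lemma gaussF_meas (σ : ℝ) : Measurable (gaussF n σ) := by
  unfold gaussF
  fun_prop

lemma lintegral_gaussF_exp (σ : ℝ) (hσ : 0 < σ) (θ : ℝ) (hθ : 0 ≤ θ) :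
    ∫⁻ x : EuclideanSpace ℝ (Fin n),
      ENNReal.ofReal (gaussF n σ x * Real.exp (-θ * (‖x‖ ^ 2 / σ ^ 2)))
      = ENNReal.ofReal ((1 + 2 * θ) ^ (-(n : ℝ) / 2)) := by
  have hb : 0 < (1 + 2 * θ) / (2 * σ ^ 2) := by positivity
  have h := lintegral_gauss (n := n) _ hb
  have e : ∀ x : EuclideanSpace ℝ (Fin n), gaussF n σ x * Real.exp (-θ * (‖x‖ ^ 2 / σ ^ 2))
      = (2 * π * σ ^ 2) ^ (-(n : ℝ) / 2) *
        Real.exp (-((1 + 2 * θ) / (2 * σ ^ 2)) * ‖x‖ ^ 2) := by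
    intro x
    unfold gaussF
    rw [mul_assoc, ← Real.exp_add]
    congr 2
    field_simp
    ring
  have hc : 0 ≤ (2 * π * σ ^ 2) ^ (-(n : ℝ) / 2) := by positivity
  simp_rw [e, ENNReal.ofReal_mul hc]
  rw [lintegral_const_mul _ (by fun_prop), h, ← ENNReal.ofReal_mul hc]
  congr 1
  have : π / ((1 + 2 * θ) / (2 * σ ^ 2)) = (2 * π * σ ^ 2) * (1 + 2 * θ)⁻¹ := by
    field_simp
  rw [this, Real.mul_rpow (x := 2 * π * σ ^ 2) (by positivity) (by positivity), ← mul_assoc,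
    ← Real.rpow_add (by positivity), Real.inv_rpow (by positivity), ← Real.rpow_neg (by positivity)]
  rw [show -(n : ℝ) / 2 + n / 2 = 0 by ring, Real.rpow_zero, one_mul, neg_div]

lemma lintegral_gaussF_sq (σ : ℝ) (hσ : 0 < σ) :
    ∫⁻ x : EuclideanSpace ℝ (Fin n),
      ENNReal.ofReal ((‖x‖ ^ 2 / σ ^ 2) * gaussF n σ x) ≠ ⊤ := by
  have hc : 0 ≤ (2 * π * σ ^ 2) ^ (-(n : ℝ) / 2) := by positivity
  have e : ∀ x : EuclideanSpace ℝ (Fin n), (‖x‖ ^ 2 / σ ^ 2) * gaussF n σ x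
      ≤ (4 * (2 * π * σ ^ 2) ^ (-(n : ℝ) / 2)) *
        Real.exp (-(1 / (4 * σ ^ 2)) * ‖x‖ ^ 2) := by
    intro x
    unfold gaussF
    set u := ‖x‖ ^ 2 / σ ^ 2 with hu
    have e1 : -‖x‖ ^ 2 / (2 * σ ^ 2) = -(u / 4) + -(u / 4) := by
      rw [hu]; field_simp; ring
    have e2 : -(1 / (4 * σ ^ 2)) * ‖x‖ ^ 2 = -(u / 4) := by
      rw [hu]; field_simp
    rw [e1, e2, Real.exp_add]
    have h1 : u * Real.exp (-(u / 4)) ≤ 4 := by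
      have := Real.add_one_le_exp (u / 4)
      rw [Real.exp_neg, ← div_eq_mul_inv, div_le_iff₀ (Real.exp_pos _)]
      linarith
    have h2 : 0 ≤ (2 * π * σ ^ 2) ^ (-(n : ℝ) / 2) * Real.exp (-(u / 4)) := by positivity
    nlinarith [mul_le_mul_of_nonneg_right h1 h2]
  have h := lintegral_gauss (n := n) (1 / (4 * σ ^ 2)) (by positivity)
  refine ne_top_of_le_ne_top ?_ (lintegral_mono fun x => ENNReal.ofReal_le_ofReal (e x))
  simp_rw [ENNReal.ofReal_mul (show 0 ≤ 4 * (2 * π * σ ^ 2) ^ (-(n : ℝ) / 2) by positivity)]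
  rw [lintegral_const_mul _ (by fun_prop), h]
  exact ENNReal.mul_ne_top ENNReal.ofReal_ne_top ENNReal.ofReal_ne_top

variable (L : Submodule ℤ (EuclideanSpace ℝ (Fin n))) [DiscreteTopology L] [IsZLattice ℝ L]

lemma exists_unfold : ∃ F : Set (EuclideanSpace ℝ (Fin n)),
    IsAddFundamentalDomain L F volume ∧
    ∀ u : EuclideanSpace ℝ (Fin n) → ℝ≥0∞, Measurable u →
    ∫⁻ x, u x = ∫⁻ x in F, ∑' l : L, u (l + x) := by
  have hF := ZLattice.isAddFundamentalDomain (Module.Free.chooseBasis ℤ L)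
    (volume : Measure (EuclideanSpace ℝ (Fin n)))
  refine ⟨_, hF, fun u hu => ?_⟩
  haveI : VAddInvariantMeasure L (EuclideanSpace ℝ (Fin n)) volume :=
    inferInstanceAs <| VAddInvariantMeasure L.toAddSubgroup (EuclideanSpace ℝ (Fin n)) volume
  rw [hF.lintegral_eq_tsum'', lintegral_tsum]
  · rfl
  · intro l
    fun_prop

lemma per_invariant {α : Type*} [AddCommMonoid α] [TopologicalSpace α]
    (u : EuclideanSpace ℝ (Fin n) → α)
    (g : L) (t : EuclideanSpace ℝ (Fin n)) :
    ∑' l : L, u (l + (g + t)) = ∑' l : L, u (l + t) := by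
  rw [← (Equiv.addRight g).tsum_eq (fun l : L => u (l + t))]
  simp [add_assoc]

lemma ae_summable (u : EuclideanSpace ℝ (Fin n) → ℝ) (hu : Measurable u) (h0 : ∀ x, 0 ≤ u x)
    (hi : ∫⁻ x, ENNReal.ofReal (u x) ≠ ⊤) :
    ∀ᵐ t : EuclideanSpace ℝ (Fin n), Summable fun l : L => u (l + t) := by
  obtain ⟨F, hF, hunf⟩ := exists_unfold L
  have hm : Measurable fun x => ENNReal.ofReal (u x) := by fun_prop
  rw [hunf _ hm] at hi
  have hmeas : Measurable fun t => ∑' l : L, ENNReal.ofReal (u (l + t)) :=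
    Measurable.ennreal_tsum fun l => by fun_prop
  have h1 := ae_lt_top hmeas hi
  have hS : MeasurableSet {t | ¬ (∑' l : L, ENNReal.ofReal (u (l + t)) < ⊤)} :=
    (measurableSet_lt hmeas measurable_const).compl
  have h2 : volume {t | ¬ (∑' l : L, ENNReal.ofReal (u (l + t)) < ⊤)} = 0 := by
    haveI : VAddInvariantMeasure L (EuclideanSpace ℝ (Fin n)) volume :=
      inferInstanceAs <| VAddInvariantMeasure L.toAddSubgroup (EuclideanSpace ℝ (Fin n)) volume
    refine hF.measure_zero_of_invariant _ ?_ ?_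
    · intro g
      ext t
      rw [Set.mem_vadd_set_iff_neg_vadd_mem]
      have := per_invariant L (fun x => ENNReal.ofReal (u x)) (-g) t
      simp only [Set.mem_setOf_eq]
      rw [← this]
      rfl
    · rw [← Measure.restrict_apply hS]
      exact h1
  have h3 : ∀ᵐ t : EuclideanSpace ℝ (Fin n), ∑' l : L, ENNReal.ofReal (u (l + t)) < ⊤ := h2
  filter_upwards [h3] with t ht
  have := ENNReal.summable_toReal ht.ne
  simpa [ENNReal.toReal_ofReal, h0] using this

lemma tsum_coset (u : EuclideanSpace ℝ (Fin n) → ℝ) (t : EuclideanSpace ℝ (Fin n)) :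
    ∑' y : coset n (L : Set (EuclideanSpace ℝ (Fin n))) t, u y = ∑' l : L, u (l + t) := by
  let e : L ≃ coset n (L : Set (EuclideanSpace ℝ (Fin n))) t :=
    { toFun := fun l => ⟨l + t, by simp [coset]⟩
      invFun := fun y => ⟨y - t, y.2⟩
      left_inv := fun l => by simp
      right_inv := fun y => by simp }
  rw [← e.tsum_eq]
  rfl

/-- Tangent-line form of the Jensen step. -/
lemma jensen_step {ι : Type*} [Nonempty ι] (w x : ι → ℝ) (hw : ∀ i, 0 < w i) (hx : ∀ i, 0 ≤ x i)
    (hsw : Summable w) (hsx : Summable fun i => x i * w i) (θ M : ℝ) (hθ : 0 ≤ θ)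
    (hM : (∑' i, x i * w i) / (∑' i, w i) ≤ M) :
    Real.exp (-θ * M) * ∑' i, w i ≤ ∑' i, w i * Real.exp (-θ * x i) := by
  have hpos : 0 < ∑' i, w i :=
    hsw.tsum_pos (fun i => (hw i).le) (Classical.arbitrary ι) (hw _)
  rw [div_le_iff₀ hpos] at hM
  have hse : Summable fun i => w i * Real.exp (-θ * x i) := by
    refine Summable.of_nonneg_of_le (fun i => ?_) (fun i => ?_) hsw
    · have := hw i
      positivity
    · have : Real.exp (-θ * x i) ≤ 1 := Real.exp_le_one_iff.2 (by nlinarith [hx i])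
      nlinarith [hw i]
  have hst : Summable fun i => Real.exp (-θ * M) * ((1 + θ * M) * w i - θ * (x i * w i)) :=
    ((hsw.mul_left _).sub (hsx.mul_left _)).mul_left _
  have hle := hst.tsum_le_tsum (g := fun i => w i * Real.exp (-θ * x i)) (fun i => ?_) hse
  · rw [tsum_mul_left, (hsw.mul_left _).tsum_sub (hsx.mul_left _), tsum_mul_left,
      tsum_mul_left] at hle
    refine le_trans ?_ hle
    refine mul_le_mul_of_nonneg_left ?_ (Real.exp_pos _).le
    nlinarith [mul_le_mul_of_nonneg_left hM hθ]
  · have h1 := Real.add_one_le_exp (-θ * x i + θ * M)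
    have h2 : Real.exp (-θ * x i) = Real.exp (-θ * M) * Real.exp (-θ * x i + θ * M) := by
      rw [← Real.exp_add]; congr 1; ring
    rw [h2]
    have h3 : 0 ≤ w i * Real.exp (-θ * M) := by
      have := hw i
      positivity
    nlinarith [mul_le_mul_of_nonneg_left h1 h3]

lemma key_bound (σ : ℝ) (hσ : 0 < σ) (θ M : ℝ) (hθ : 0 ≤ θ) :
    gaussMeasure n σ {t : EuclideanSpace ℝ (Fin n) |
      (∑' y : coset n (L : Set (EuclideanSpace ℝ (Fin n))) t,
            (‖(y : EuclideanSpace ℝ (Fin n))‖ ^ 2 / σ ^ 2) * gaussF n σ y) /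
          gaussMass n σ (coset n (L : Set (EuclideanSpace ℝ (Fin n))) t) ≤ M}
      ≤ ENNReal.ofReal (Real.exp (θ * M) * (1 + 2 * θ) ^ (-(n : ℝ) / 2)) := by
  obtain ⟨F, hF, hunf⟩ := exists_unfold L
  have hfm := gaussF_meas (n := n) σ
  set h : EuclideanSpace ℝ (Fin n) → ℝ :=
    fun x => gaussF n σ x * Real.exp (-θ * (‖x‖ ^ 2 / σ ^ 2)) with hh
  have hhm : Measurable h := by rw [hh]; fun_prop
  have hhpos : ∀ x, 0 ≤ h x := fun x => (mul_pos (gaussF_pos σ hσ x) (Real.exp_pos _)).le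
  set G : EuclideanSpace ℝ (Fin n) → ℝ≥0∞ := fun t => ∑' l : L, ENNReal.ofReal (gaussF n σ (l + t))
    with hG
  set H : EuclideanSpace ℝ (Fin n) → ℝ≥0∞ := fun t => ∑' l : L, ENNReal.ofReal (h (l + t))
    with hH
  have hGm : Measurable G := Measurable.ennreal_tsum fun l => by fun_prop
  have hHm : Measurable H := Measurable.ennreal_tsum fun l => by fun_prop
  set B : Set (EuclideanSpace ℝ (Fin n)) := {t | G t ≤ ENNReal.ofReal (Real.exp (θ * M)) * H t}
    with hB
  have hBm : MeasurableSet B := measurableSet_le hGm (hHm.const_mul _)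
  have hfi : ∫⁻ x : EuclideanSpace ℝ (Fin n), ENNReal.ofReal (gaussF n σ x) ≠ ⊤ := by
    have := lintegral_gaussF_exp (n := n) σ hσ 0 le_rfl
    simp only [neg_zero, zero_mul, Real.exp_zero, mul_one] at this
    rw [this]
    exact ENNReal.ofReal_ne_top
  have hs1 := ae_summable L (gaussF n σ) hfm (fun x => (gaussF_pos σ hσ x).le) hfi
  have hs2 := ae_summable L (fun x => (‖x‖ ^ 2 / σ ^ 2) * gaussF n σ x) (by fun_prop)
    (fun x => mul_nonneg (by positivity) (gaussF_pos σ hσ x).le) (lintegral_gaussF_sq σ hσ)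
  have hac : gaussMeasure n σ ≪ volume := withDensity_absolutelyContinuous _ _
  have hAB : gaussMeasure n σ {t : EuclideanSpace ℝ (Fin n) |
      (∑' y : coset n (L : Set (EuclideanSpace ℝ (Fin n))) t,
            (‖(y : EuclideanSpace ℝ (Fin n))‖ ^ 2 / σ ^ 2) * gaussF n σ y) /
          gaussMass n σ (coset n (L : Set (EuclideanSpace ℝ (Fin n))) t) ≤ M}
      ≤ gaussMeasure n σ B := by
    refine measure_mono_ae ?_
    filter_upwards [hac hs1, hac hs2] with t h1 h2 ht
    change _ ≤ _ at ht
    change G t ≤ _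
    unfold gaussMass at ht
    rw [tsum_coset L (fun y => (‖y‖ ^ 2 / σ ^ 2) * gaussF n σ y), tsum_coset L (gaussF n σ)] at ht
    have hj := jensen_step (fun l : L => gaussF n σ (l + t)) (fun l : L => ‖(l : _) + t‖ ^ 2 / σ ^ 2)
      (fun l => gaussF_pos σ hσ _) (fun l => by positivity) h1 h2 θ M hθ ht
    have hsh : Summable fun l : L => h (l + t) := by
      refine Summable.of_nonneg_of_le (fun i => hhpos _) (fun i => ?_) h1
      have : Real.exp (-θ * (‖(i : EuclideanSpace ℝ (Fin n)) + t‖ ^ 2 / σ ^ 2)) ≤ 1 := by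
        apply Real.exp_le_one_iff.2
        rw [neg_mul]
        exact neg_nonpos.2 (by positivity)
      exact mul_le_of_le_one_right (gaussF_pos σ hσ _).le this
    rw [hG, hH]
    simp only
    rw [← ENNReal.ofReal_tsum_of_nonneg (fun l => (gaussF_pos σ hσ _).le) h1,
      ← ENNReal.ofReal_tsum_of_nonneg (fun l => hhpos _) hsh,
      ← ENNReal.ofReal_mul (Real.exp_pos _).le]
    apply ENNReal.ofReal_le_ofReal
    have := mul_le_mul_of_nonneg_left hj (Real.exp_pos (θ * M)).le
    rwa [← mul_assoc, ← Real.exp_add, show θ * M + -θ * M = 0 by ring, Real.exp_zero,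
      one_mul] at this
  refine hAB.trans ?_
  have hGi : ∀ (l : L) t, G (l + t) = G t := fun l t =>
    per_invariant L (fun x => ENNReal.ofReal (gaussF n σ x)) l t
  have hHi : ∀ (l : L) t, H (l + t) = H t := fun l t =>
    per_invariant L (fun x => ENNReal.ofReal (h x)) l t
  have hmB : Measurable (B.indicator fun x => ENNReal.ofReal (gaussF n σ x)) :=
    Measurable.indicator (by fun_prop) hBm
  unfold gaussMeasure
  rw [withDensity_apply _ hBm, ← lintegral_indicator hBm, hunf _ hmB]
  calc _ ≤ ∫⁻ x in F, ENNReal.ofReal (Real.exp (θ * M)) * H x := by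
        refine lintegral_mono fun x => ?_
        simp only
        by_cases hx : x ∈ B
        · refine le_trans (ENNReal.tsum_le_tsum fun l => Set.indicator_le_self _ _ _) ?_
          exact hx
        · have : ∀ l : L, (l : EuclideanSpace ℝ (Fin n)) + x ∉ B := by
            intro l hl
            apply hx
            change G _ ≤ _ * H _ at hl
            rw [hGi, hHi] at hl
            exact hl
          simp [this]
    _ = ENNReal.ofReal (Real.exp (θ * M)) * ∫⁻ x, ENNReal.ofReal (h x) := by
        rw [lintegral_const_mul _ hHm, hunf _ (by fun_prop)]
    _ = _ := by
        rw [lintegral_gaussF_exp σ hσ θ hθ, ENNReal.ofReal_mul (Real.exp_pos _).le]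

lemma log_bound (ε : ℝ) (hε0 : 0 < ε) (hε1 : ε < 1) :
    Real.log (1 - ε) ≤ -(ε + ε ^ 2 / 2 + ε ^ 3 / 3) := by
  have h := Real.hasSum_pow_div_log_of_abs_lt_one (x := ε) (by rw [abs_of_pos hε0]; exact hε1)
  have := sum_le_hasSum (Finset.range 3) (fun i _ => by positivity) h
  norm_num [Finset.sum_range_succ] at this
  linarith

end helpers

/-- lower tail bound for the normalized expected power
`m(t) = E_{X ~ D_{Λ+t,σ_s}}[‖X‖²]/σ_s²` of the dithered discrete Gaussian. -/
theorem power_lower_tail (n : ℕ) (L : Submodule ℤ (EuclideanSpace ℝ (Fin n)))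
    [DiscreteTopology L] [IsZLattice ℝ L]
    (σs : ℝ) (hσs : 0 < σs) (ε : ℝ) (hε0 : 0 < ε) (hε1 : ε < 1) :
    gaussMeasure n σs {t : EuclideanSpace ℝ (Fin n) |
      (∑' y : coset n (L : Set (EuclideanSpace ℝ (Fin n))) t,
            (‖(y : EuclideanSpace ℝ (Fin n))‖ ^ 2 / σs ^ 2) * gaussF n σs y) /
          gaussMass n σs (coset n (L : Set (EuclideanSpace ℝ (Fin n))) t) ≤ (1 - ε) * n}
      ≤ ENNReal.ofReal (Real.exp (-(ε ^ 2 / 4 + ε ^ 3 / 6) * n)) := by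
  have h1 : 0 < 1 - ε := by linarith
  refine (key_bound L σs hσs (ε / (2 * (1 - ε))) _ (by positivity)).trans ?_
  apply ENNReal.ofReal_le_ofReal
  have e1 : 1 + 2 * (ε / (2 * (1 - ε))) = (1 - ε)⁻¹ := by
    field_simp
    ring
  have e2 : ε / (2 * (1 - ε)) * ((1 - ε) * n) = ε / 2 * n := by
    field_simp
  rw [e1, e2, Real.rpow_def_of_pos (by positivity), Real.log_inv, ← Real.exp_add]
  apply Real.exp_le_exp.2
  have hn : (0 : ℝ) ≤ n := Nat.cast_nonneg n
  nlinarith [mul_le_mul_of_nonneg_right (log_bound ε hε0 hε1) hn]
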